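/- arXiv:math/0702776 — 2 statements merged into one kernel-verified Lean document; each statement's English description precedes it below -/
import Mathlib

section
/- Let α < β be real numbers, K a natural number, F a finite subset of ℝ with at most K elements, S a subset of ℝ, and ε > 0 with ε < (β − α)/(3(K+1)). Suppose every point x ∈ S ∩ (α, β) satisfies dist(x, F) ≤ ε. Then there exists an open interval (a, b) ⊆ (α, β) with b − a ≥ (β − α)/(3(K+1)) and (a, b) ∩ S = ∅. -/
open Set

/-!
Cut `(α, β)` into `K + 1` consecutive cells of equal length. By pigeonhole some cell contains no
point of `F`, and shrinking it by `ε` at both ends leaves an interval that avoids the closed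
`ε`-thickening of `F`. Its length is `(β - α)/(K + 1) - 2ε`, which is at least a third of a cell
as soon as `ε` is at most a third of a cell.
-/

theorem exists_disjoint_of_card_lt {ι X : Type*} {t : Finset ι} {s : ι → Set X} {F : Finset X}
    (hs : (t : Set ι).PairwiseDisjoint s) (hcard : F.card < t.card) :
    ∃ i ∈ t, Disjoint (F : Set X) (s i) := by
  by_contra! hmeet
  refine hcard.not_ge (Finset.card_le_card_of_forall_subsingleton (fun i x ↦ x ∈ s i) ?_ ?_)
  · exact fun i hi ↦ not_disjoint_iff.mp (hmeet i hi)
  · exact fun x _ i hi j hj ↦ hs.elim_set hi.1 hj.1 x hi.2 hj.2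

theorem exists_Ioo_subset_disjoint_finset {k : Type*} [Field k] [LinearOrder k]
    [IsStrictOrderedRing k] {α β : k} (hαβ : α ≤ β) {n : ℕ} {F : Finset k} (hF : F.card < n) :
    ∃ a b, Ioo a b ⊆ Ioo α β ∧ b - a = (β - α) / n ∧ Disjoint (F : Set k) (Ioo a b) := by
  have hn : (n : k) ≠ 0 := Nat.cast_ne_zero.mpr (Nat.ne_zero_of_lt hF)
  let c : ℕ → k := fun i ↦ α + i * ((β - α) / n)
  have hc : Monotone c := fun i j hij ↦ by
    have := sub_nonneg.mpr hαβ
    dsimp only [c]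
    gcongr
  have hc_zero : c 0 = α := by simp [c]
  have hc_last : c n = β := by simp [c, mul_div_cancel₀ _ hn]
  obtain ⟨i, hi, hdisj⟩ := exists_disjoint_of_card_lt (t := Finset.range n)
    (hc.pairwise_disjoint_on_Ioo_succ.set_pairwise _) (by rwa [Finset.card_range])
  refine ⟨c i, c (i + 1), Ioo_subset_Ioo ?_ ?_, ?_, hdisj⟩
  · exact hc_zero.ge.trans (hc i.zero_le)
  · exact (hc (Finset.mem_range.mp hi)).trans hc_last.le
  · simp only [c, Nat.cast_succ]
    ring

theorem disjoint_cthickening_ball {X : Type*} [PseudoMetricSpace X] {F : Set X} {c : X} {r ε : ℝ}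
    (hε : 0 ≤ ε) (h : Disjoint F (Metric.ball c r)) :
    Disjoint (Metric.cthickening ε F) (Metric.ball c (r - ε)) := by
  refine disjoint_left.mpr fun x hxF hxc ↦ ?_
  have hlt : ε < r - dist x c := lt_sub_comm.mp (Metric.mem_ball.mp hxc)
  obtain ⟨y, hyF, hxy⟩ := Metric.mem_thickening_iff.mp
    (Metric.cthickening_subset_thickening' (hε.trans_lt hlt) hlt F hxF)
  have hyc : y ∈ Metric.ball c r :=
    Metric.ball_subset_ball' (sub_add_cancel r (dist x c)).le (Metric.mem_ball'.mpr hxy)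
  exact disjoint_left.mp h hyF hyc

theorem disjoint_cthickening_Ioo {F : Set ℝ} {a b ε : ℝ} (hε : 0 ≤ ε)
    (h : Disjoint F (Ioo a b)) :
    Disjoint (Metric.cthickening ε F) (Ioo (a + ε) (b - ε)) := by
  rw [Real.Ioo_eq_ball] at h ⊢
  convert disjoint_cthickening_ball hε h using 2 <;> ring

theorem exists_gap_of_spectrum_near_finset_general {α β : ℝ} (hαβ : α ≤ β) {K : ℕ}
    {F : Finset ℝ} (hF : F.card ≤ K) {S : Set ℝ} {ε : ℝ} (hε : 0 ≤ ε)
    (hloc : S ∩ Ioo α β ⊆ Metric.cthickening ε F) :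
    ∃ a b : ℝ, Ioo a b ⊆ Ioo α β ∧ b - a = (β - α) / ((K : ℝ) + 1) - 2 * ε ∧
      Ioo a b ∩ S = ∅ := by
  obtain ⟨a, b, hsub, hlen, hdisj⟩ :=
    exists_Ioo_subset_disjoint_finset hαβ (Nat.lt_succ_of_le hF)
  have hshrink : Ioo (a + ε) (b - ε) ⊆ Ioo α β :=
    (Ioo_subset_Ioo (le_add_of_nonneg_right hε) (sub_le_self b hε)).trans hsub
  refine ⟨a + ε, b - ε, hshrink, ?_, ?_⟩
  · rw [← Nat.cast_succ, ← hlen]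
    ring
  · exact disjoint_iff_inter_eq_empty.mp <| disjoint_left.mpr fun x hx hxS ↦
      disjoint_left.mp (disjoint_cthickening_Ioo hε hdisj) (hloc ⟨hxS, hshrink hx⟩) hx

/-- If the trace of `S` on `(α, β)` lies in an `ε`-neighborhood of a set `F` of at most `K`
points, and `ε < (β - α)/(3(K+1))`, then `S` omits an open subinterval of `(α, β)` of length
at least `(β - α)/(3(K+1))`.  (The distance to `F` is the extended distance, `+∞` for `F = ∅`.) -/
theorem exists_gap_of_spectrum_near_finset
    (α β : ℝ) (hαβ : α < β) (K : ℕ) (F : Finset ℝ) (hF : F.card ≤ K)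
    (S : Set ℝ) (ε : ℝ) (hε : 0 < ε) (hεsmall : ε < (β - α) / (3 * ((K : ℝ) + 1)))
    (hloc : ∀ x ∈ S ∩ Ioo α β, EMetric.infEdist x (F : Set ℝ) ≤ ENNReal.ofReal ε) :
    ∃ a b : ℝ, Ioo a b ⊆ Ioo α β ∧ (β - α) / (3 * ((K : ℝ) + 1)) ≤ b - a ∧
      Ioo a b ∩ S = ∅ := by
  obtain ⟨a, b, hsub, hlen, hS⟩ := exists_gap_of_spectrum_near_finset_general hαβ.le hF hε.le hloc
  rw [div_mul_eq_div_div_swap] at hεsmall ⊢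
  exact ⟨a, b, hsub, by linarith, hS⟩
end

section
/- Let S and F be subsets of ℝ, let A < B be reals, I = [A, B], let K be a natural number, N ≥ 1 a natural number, and δ, ε, ε' > 0 with ε' ≤ δ/8, ε ≤ δ/8, and ε < δ/(24(K+1)). Assume: (i) every point x ∈ S ∩ I satisfies dist(x, F) ≤ ε and every point y ∈ F ∩ I satisfies dist(y, S) ≤ ε; (ii) F ∩ I has at most K elements; (iii) there are points μ₀ < μ₁ < … < μ_N in I with μⱼ − μⱼ₋₁ > δ for j = 1, …, N, μ₀ − A > δ and B − μ_N > δ; (iv) each μⱼ satisfies dist(μⱼ, F) ≤ ε'. Then there exist points s₀ < s₁ < … < s_N in S ∩ I and, for each j ∈ {1, …, N}, an open interval Jⱼ ⊆ (sⱼ₋₁, sⱼ) of length at least δ/(6(K+1)) with Jⱼ ∩ S = ∅; in particular, S has at least N distinct gaps of length ≥ δ/(6(K+1)) inside I. -/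
open Set

/-!
Each `μ j` lies close to a point of `F`, hence close to a point `s j` of `S`, and consecutive `s j`
are more than `δ / 2` apart. Cut `(s j, s (j + 1))` into `K + 1` equal pieces: since `F` has at most
`K` points in `[A, B]`, one piece contains no point of `F`. Shrinking that piece by `ε` at both ends
leaves an interval free of `S`, because a point of `S` there would have a point of `F` within the
piece; its length is at least `δ / (2 * (K + 1)) - 2 * ε`.
-/

theorem exists_disjoint_of_encard_lt {α ι : Type*} {P : ι → Set α} {T : Set α}
    (hP : Pairwise (Function.onFun Disjoint P)) (hT : T.encard < ENat.card ι) :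
    ∃ i, Disjoint (P i) T := by
  by_contra! hmeet
  choose point hpointP hpointT using fun i => not_disjoint_iff.mp (hmeet i)
  have hinj : Function.Injective fun i => (⟨point i, hpointT i⟩ : T) := fun i j hij =>
    hP.eq <| not_disjoint_iff.mpr
      ⟨point i, hpointP i, (show point i = point j from Subtype.ext_iff.mp hij) ▸ hpointP j⟩
  exact hT.not_ge (ENat.card_le_card_of_injective hinj)

section OrderedField

variable {𝕜 : Type*} [Field 𝕜] [LinearOrder 𝕜] [IsStrictOrderedRing 𝕜]

theorem exists_Ioo_disjoint_of_encard_le {T : Set 𝕜} {K : ℕ} {a b : 𝕜} (hab : a ≤ b)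
    (hT : T.encard ≤ K) :
    ∃ c d, Ioo c d ⊆ Ioo a b ∧ d - c = (b - a) / (K + 1) ∧ Disjoint (Ioo c d) T := by
  set h := (b - a) / ((K : 𝕜) + 1) with h_def
  have hh : 0 ≤ h := div_nonneg (sub_nonneg.mpr hab) (by positivity)
  have hb : a + (K + 1 : ℕ) * h = b := by
    rw [h_def]
    push_cast
    field_simp
    ring
  have hgrid : Monotone fun i : ℕ => a + i * h := fun i j hij =>
    add_le_add_right (mul_le_mul_of_nonneg_right (Nat.cast_le.mpr hij) hh) a
  obtain ⟨i, hi⟩ := exists_disjoint_of_encard_lt (ι := Fin (K + 1)) (T := T)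
    (hgrid.pairwise_disjoint_on_Ioo_succ.comp_of_injective Fin.val_injective)
    (hT.trans_lt (by simpa using ENat.natCast_lt_succ))
  refine ⟨_, _, Ioo_subset_Ioo ?_ ?_, ?_, hi⟩
  · exact le_add_of_nonneg_right (mul_nonneg (Nat.cast_nonneg _) hh)
  · exact (hgrid (Nat.succ_le_of_lt i.isLt)).trans_eq hb
  · simp only [Nat.succ_eq_succ, Nat.succ_eq_add_one, Nat.cast_add, Nat.cast_one]
    ring

theorem div_six_mul_le_div_sub_two_mul {δ ε κ L : 𝕜} (hκ : 0 < κ) (hδ : 0 ≤ δ) (hL : δ / 2 ≤ L)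
    (hε : ε ≤ δ / (24 * κ)) : δ / (6 * κ) ≤ L / κ - 2 * ε :=
  calc δ / (6 * κ) ≤ 5 / 2 * (δ / (6 * κ)) :=
        le_mul_of_one_le_left (by positivity) (by norm_num)
    _ = δ / 2 / κ - 2 * (δ / (24 * κ)) := by
        field_simp
        ring
    _ ≤ L / κ - 2 * ε := by gcongr

end OrderedField

section Thickening

open Metric

theorem exists_mem_dist_lt_of_mem_cthickening {X : Type*} [PseudoMetricSpace X] {F : Set X} {x : X}
    {ε r : ℝ} (hx : x ∈ cthickening ε F) (hε : 0 ≤ ε) (hr : ε < r) : ∃ y ∈ F, dist x y < r :=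
  mem_thickening_iff.mp (cthickening_subset_thickening' (hε.trans_lt hr) hr F hx)

theorem exists_mem_dist_lt_of_inter_ball_subset_cthickening {X : Type*} [PseudoMetricSpace X]
    {S F : Set X} {x : X} {ε ε' r : ℝ} (hε : 0 ≤ ε) (hε' : 0 ≤ ε') (hr : ε' + ε < r)
    (hx : x ∈ cthickening ε' F) (hFS : F ∩ ball x r ⊆ cthickening ε S) :
    ∃ y ∈ S, dist x y < r := by
  obtain ⟨f, hfF, hxf⟩ :=
    exists_mem_dist_lt_of_mem_cthickening hx hε' (lt_sub_iff_add_lt.mpr hr)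
  have hf_ball : f ∈ ball x r := mem_ball'.mpr (by linarith)
  obtain ⟨y, hyS, hfy⟩ :=
    exists_mem_dist_lt_of_mem_cthickening (hFS ⟨hfF, hf_ball⟩) hε (lt_sub_comm.mp hxf)
  exact ⟨y, hyS, (dist_triangle x f y).trans_lt (lt_sub_iff_add_lt'.mp hfy)⟩

theorem disjoint_Ioo_of_inter_subset_cthickening {S F : Set ℝ} {c d ε : ℝ} (hε : 0 ≤ ε)
    (hSF : S ∩ Ioo c d ⊆ cthickening ε F) (hF : Disjoint (Ioo c d) F) :
    Disjoint (Ioo (c + ε) (d - ε)) S := by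
  refine disjoint_left.mpr fun x ⟨hcx, hxd⟩ hxS => ?_
  have hx : x ∈ cthickening ε F := hSF ⟨hxS, by linarith, by linarith⟩
  obtain ⟨f, hfF, hxf⟩ := exists_mem_dist_lt_of_mem_cthickening (r := min (x - c) (d - x)) hx hε
    (lt_min (by linarith) (by linarith))
  obtain ⟨hfc, hfd⟩ := lt_min_iff.mp hxf
  rw [Real.dist_eq, abs_lt] at hfc hfd
  exact disjoint_left.mp hF ⟨by linarith, by linarith⟩ hfF

theorem exists_Ioo_disjoint_of_inter_subset_cthickening {S F : Set ℝ} {K : ℕ} {a b ε : ℝ}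
    (hab : a ≤ b) (hε : 0 ≤ ε) (hSF : S ∩ Ioo a b ⊆ cthickening ε F)
    (hF : (F ∩ Ioo a b).encard ≤ K) :
    ∃ c d, Ioo c d ⊆ Ioo a b ∧ d - c = (b - a) / (K + 1) - 2 * ε ∧ Disjoint (Ioo c d) S := by
  obtain ⟨c, d, hcd, hlen, hdisj⟩ := exists_Ioo_disjoint_of_encard_le hab hF
  have hcdF : Disjoint (Ioo c d) F :=
    disjoint_left.mpr fun _ hx hxF => disjoint_left.mp hdisj hx ⟨hxF, hcd hx⟩
  refine ⟨c + ε, d - ε, (Ioo_subset_Ioo (by linarith) (by linarith)).trans hcd, by linarith, ?_⟩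
  exact disjoint_Ioo_of_inter_subset_cthickening hε
    ((inter_subset_inter_right S hcd).trans hSF) hcdF

theorem ball_subset_Icc_of_monotoneOn {ι : Type*} [Preorder ι] {f : ι → ℝ} {m j n : ι} {A B r : ℝ}
    (hf : MonotoneOn f (Icc m n)) (hj : j ∈ Icc m n) (hA : A ≤ f m - r) (hB : f n + r ≤ B) :
    ball (f j) r ⊆ Icc A B := by
  have hmn : m ≤ n := hj.1.trans hj.2
  have hmj : f m ≤ f j := hf (left_mem_Icc.mpr hmn) hj hj.1
  have hjn : f j ≤ f n := hf hj (right_mem_Icc.mpr hmn) hj.2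
  rw [Real.ball_eq_Ioo]
  exact Ioo_subset_Icc_self.trans (Icc_subset_Icc (by linarith) (by linarith))

theorem exists_seq_mem_inter_Icc_of_separated {S F : Set ℝ} {A B δ ε ε' r : ℝ} {N : ℕ} {μ : ℕ → ℝ}
    (hδ : 0 ≤ δ) (hε : 0 ≤ ε) (hε' : 0 ≤ ε') (hr : ε' + ε < r)
    (hFS : F ∩ Icc A B ⊆ cthickening ε S) (hsep : ∀ j < N, μ j + δ < μ (j + 1))
    (hA : A ≤ μ 0 - r) (hB : μ N + r ≤ B) (hμF : ∀ j ≤ N, μ j ∈ cthickening ε' F) :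
    ∃ s : ℕ → ℝ, (∀ j ≤ N, s j ∈ S ∩ Icc A B) ∧ ∀ j < N, δ - 2 * r < s (j + 1) - s j := by
  have hmono : StrictMonoOn μ (Iic N) :=
    strictMonoOn_Iic_of_lt_succ fun j hj => (le_add_of_nonneg_right hδ).trans_lt (hsep j hj)
  have hball : ∀ j ≤ N, ball (μ j) r ⊆ Icc A B := fun j hj =>
    ball_subset_Icc_of_monotoneOn (hmono.monotoneOn.mono Icc_subset_Iic_self) ⟨j.zero_le, hj⟩ hA hB
  choose! s hsS hsμ using fun j (hj : j ≤ N) =>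
    exists_mem_dist_lt_of_inter_ball_subset_cthickening hε hε' hr (hμF j hj)
      ((inter_subset_inter_right F (hball j hj)).trans hFS)
  refine ⟨s, fun j hj => ⟨hsS j hj, hball j hj (mem_ball'.mpr (hsμ j hj))⟩, fun j hj => ?_⟩
  have hleft := abs_lt.mp (hsμ j hj.le)
  have hright := abs_lt.mp (hsμ (j + 1) hj)
  linarith [hsep j hj]

theorem exists_gap_of_inter_Icc_subset_cthickening {S F : Set ℝ} {K : ℕ} {A B a b δ ε : ℝ}
    (hδ : 0 ≤ δ) (hε : 0 ≤ ε) (hεK : ε ≤ δ / (24 * ((K : ℝ) + 1)))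
    (hSF : S ∩ Icc A B ⊆ cthickening ε F) (hF : (F ∩ Icc A B).encard ≤ K)
    (ha : A ≤ a) (hb : b ≤ B) (hab : δ / 2 ≤ b - a) :
    ∃ c d, Ioo c d ⊆ Ioo a b ∧ δ / (6 * ((K : ℝ) + 1)) ≤ d - c ∧ Disjoint (Ioo c d) S := by
  have hI : Ioo a b ⊆ Icc A B := Ioo_subset_Icc_self.trans (Icc_subset_Icc ha hb)
  obtain ⟨c, d, hcd, hlen, hdisj⟩ := exists_Ioo_disjoint_of_inter_subset_cthickening
    (by linarith) hε ((inter_subset_inter_right S hI).trans hSF)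
    ((encard_le_encard (inter_subset_inter_right F hI)).trans hF)
  exact ⟨c, d, hcd, hlen ▸ div_six_mul_le_div_sub_two_mul (by positivity) hδ hab hεK, hdisj⟩

end Thickening

/-- Abstract gap theorem: if the spectrum `S` of the full operator and the spectrum `F` of the
auxiliary (Dirichlet) operator are mutually `ε`-close on the interval `I = [A, B]`, `F ∩ I` has
at most `K` points, and there are `N + 1` approximate eigenvalues `μ₀ < μ₁ < ⋯ < μ_N`
(`ε'`-close to `F`) separated by more than `δ` from each other and from the endpoints of `I`,
then `S` has at least `N` gaps of length `≥ δ/(6(K+1))` inside `I`, separated by points of `S`. -/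
theorem spectrum_has_gaps_of_approx_eigenvalues
    (S F : Set ℝ) (A B : ℝ) (hAB : A < B) (K N : ℕ) (hN : 1 ≤ N)
    (δ ε ε' : ℝ) (hδ : 0 < δ) (hε : 0 < ε) (hε' : 0 < ε')
    (hε'δ : ε' ≤ δ / 8) (hεδ : ε ≤ δ / 8) (hεK : ε < δ / (24 * ((K : ℝ) + 1)))
    (hSF : ∀ x ∈ S ∩ Icc A B, EMetric.infEdist x F ≤ ENNReal.ofReal ε)
    (hFS : ∀ y ∈ F ∩ Icc A B, EMetric.infEdist y S ≤ ENNReal.ofReal ε)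
    (hKfin : (F ∩ Icc A B).Finite) (hK : (F ∩ Icc A B).ncard ≤ K)
    (μ : ℕ → ℝ)
    (hμI : ∀ j ≤ N, μ j ∈ Icc A B)
    (hμsep : ∀ j, 1 ≤ j → j ≤ N → μ j - μ (j - 1) > δ)
    (hμA : μ 0 - A > δ) (hμB : B - μ N > δ)
    (hμF : ∀ j ≤ N, EMetric.infEdist (μ j) F ≤ ENNReal.ofReal ε') :
    ∃ s : ℕ → ℝ,
      (∀ j ≤ N, s j ∈ S ∩ Icc A B) ∧
      (∀ j, j < N → s j < s (j + 1)) ∧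
      (∀ j, 1 ≤ j → j ≤ N → ∃ a b : ℝ,
        Ioo a b ⊆ Ioo (s (j - 1)) (s j) ∧
        δ / (6 * ((K : ℝ) + 1)) ≤ b - a ∧
        Ioo a b ∩ S = ∅) := by
  have hsep : ∀ j < N, μ j + δ < μ (j + 1) := fun j hj =>
    lt_sub_iff_add_lt'.mp (hμsep (j + 1) j.succ_pos hj)
  have hr : ε' + ε < δ / 4 := by
    have hεK_le : δ / (24 * ((K : ℝ) + 1)) ≤ δ / 24 := by
      gcongr
      linarith [K.cast_nonneg (α := ℝ)]
    linarith
  obtain ⟨s, hs, hstep⟩ := exists_seq_mem_inter_Icc_of_separated hδ.le hε.le hε'.le hr hFS hsep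
    (by linarith) (by linarith) hμF
  refine ⟨s, hs, fun j hj => by linarith [hstep j hj], ?_⟩
  rintro (_ | j) hj hjN
  · contradiction
  obtain ⟨a, b, hab, hlen, hdisj⟩ := exists_gap_of_inter_Icc_subset_cthickening hδ.le hε.le hεK.le
    hSF (encard_le_coe_iff_finite_ncard_le.mpr ⟨hKfin, hK⟩) (hs j (by lia)).2.1 (hs _ hjN).2.2
    (by linarith [hstep j hjN])
  exact ⟨a, b, hab, hlen, hdisj.inter_eq⟩
end
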